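/- arXiv:2504.11296 — 10 statements merged into one kernel-verified Lean document; each statement's English description precedes it below -/
import Mathlib

section
/- Let B_m : ℝ² → ℝ (m ∈ ℤ) be smooth functions of (x, y) such that for every m ∈ ℤ the first two flows of the Volterra hierarchy hold: ∂_x B_m = B_m (B_{m+1} − B_{m−1}) and ∂_y B_m = B_m (V4_{m+1} − V4_{m−1}). Then for every n ∈ ℤ the functions φ := B_n and ψ := B_{n−1} satisfy the system of conservation laws ∂_y φ = ∂_x (φ² + 2 φ ψ + ∂_x φ) and ∂_y ψ = ∂_x (ψ² + 2 φ ψ − ∂_x ψ). -/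
/-- If the family `B m` solves the first two flows of the Volterra
hierarchy (with respect to `x = t₂` and `y = t₄`), then for every `n` the pair
`φ = B n`, `ψ = B (n-1)` satisfies the stated system of conservation laws. -/
theorem volterra_first_two_flows_conservation_laws
    (B V4 : ℤ → ℝ → ℝ → ℝ)
    (hB : ∀ m : ℤ, ContDiff ℝ (⊤ : ℕ∞) (fun p : ℝ × ℝ => B m p.1 p.2))
    (hV4 : ∀ (m : ℤ) (x y : ℝ),
      V4 m x y = B m x y * (B (m - 1) x y + B m x y + B (m + 1) x y))
    (hx : ∀ (m : ℤ) (x y : ℝ),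
      deriv (fun x' => B m x' y) x = B m x y * (B (m + 1) x y - B (m - 1) x y))
    (hy : ∀ (m : ℤ) (x y : ℝ),
      deriv (fun y' => B m x y') y = B m x y * (V4 (m + 1) x y - V4 (m - 1) x y))
    (n : ℤ) (x y : ℝ) :
    deriv (fun y' => B n x y') y =
      deriv (fun x' =>
        B n x' y ^ 2 + 2 * B n x' y * B (n - 1) x' y
          + deriv (fun x'' => B n x'' y) x') x
    ∧
    deriv (fun y' => B (n - 1) x y') y =
      deriv (fun x' =>
        B (n - 1) x' y ^ 2 + 2 * B n x' y * B (n - 1) x' y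
          - deriv (fun x'' => B (n - 1) x'' y) x') x := by
  have hd : ∀ (m : ℤ) (a : ℝ), HasDerivAt (fun x' => B m x' y)
      (B m a y * (B (m + 1) a y - B (m - 1) a y)) a := by
    intro m a
    rw [← hx m a y]
    apply DifferentiableAt.hasDerivAt
    have h1 : Differentiable ℝ (fun p : ℝ × ℝ => B m p.1 p.2) :=
      (hB m).differentiable (by simp)
    have h2 : Differentiable ℝ (fun x' : ℝ => (x', y)) := by fun_prop
    exact (h1.comp h2) a
  have key : ∀ m : ℤ, deriv (fun y' => B m x y') y =
      deriv (fun x' => B m x' y * (B (m - 1) x' y + B m x' y + B (m + 1) x' y)) x := by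
    intro m
    have h := (hd m x).fun_mul (((hd (m - 1) x).fun_add (hd m x)).fun_add (hd (m + 1) x))
    rw [h.deriv, hy, hV4, hV4]
    simp only [sub_add_cancel, add_sub_cancel_right]
    ring
  constructor
  · rw [key n]
    congr 1
    funext a
    rw [hx]
    ring
  · rw [key (n - 1)]
    congr 1
    funext a
    rw [hx]
    simp only [sub_add_cancel]
    ring
end

section
/- Let B_m : ℝ² → ℝ (m ∈ ℤ) be smooth functions of (x, t) such that for every m ∈ ℤ the first and third flows of the Volterra hierarchy hold: ∂_x B_m = B_m (B_{m+1} − B_{m−1}) and ∂_t B_m = B_m (V6_{m+1} − V6_{m−1}). Then for every n ∈ ℤ the functions φ := B_n and ψ := B_{n−1} satisfy the system of conservation laws ∂_t φ = ∂_x (φ³ + 3(ψ + 2φ) φ ψ + 3(φ + ψ) ∂_x φ + ∂_x² φ) and ∂_t ψ = ∂_x (ψ³ + 3(φ + 2ψ) φ ψ − 3(φ + ψ) ∂_x ψ + ∂_x² ψ). -/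
/-- If the family `B m` solves the first and third flows of the Volterra
hierarchy (with respect to `x = t₂` and `t = t₆`), then for every `n` the pair
`φ = B n`, `ψ = B (n-1)` satisfies the stated system of conservation laws. -/
theorem volterra_first_third_flows_conservation_laws
    (B V4 V6 : ℤ → ℝ → ℝ → ℝ)
    (hB : ∀ m : ℤ, ContDiff ℝ (⊤ : ℕ∞) (fun p : ℝ × ℝ => B m p.1 p.2))
    (hV4 : ∀ (m : ℤ) (x t : ℝ),
      V4 m x t = B m x t * (B (m - 1) x t + B m x t + B (m + 1) x t))
    (hV6 : ∀ (m : ℤ) (x t : ℝ),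
      V6 m x t = B m x t *
        (B (m - 1) x t * B (m + 1) x t + V4 (m - 1) x t + V4 m x t + V4 (m + 1) x t))
    (hx : ∀ (m : ℤ) (x t : ℝ),
      deriv (fun x' => B m x' t) x = B m x t * (B (m + 1) x t - B (m - 1) x t))
    (ht : ∀ (m : ℤ) (x t : ℝ),
      deriv (fun t' => B m x t') t = B m x t * (V6 (m + 1) x t - V6 (m - 1) x t))
    (n : ℤ) (x t : ℝ) :
    deriv (fun t' => B n x t') t =
      deriv (fun x' =>
        B n x' t ^ 3 + 3 * (B (n - 1) x' t + 2 * B n x' t) * B n x' t * B (n - 1) x' t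
          + 3 * (B n x' t + B (n - 1) x' t) * deriv (fun x'' => B n x'' t) x'
          + deriv (fun x'' => deriv (fun x''' => B n x''' t) x'') x') x
    ∧
    deriv (fun t' => B (n - 1) x t') t =
      deriv (fun x' =>
        B (n - 1) x' t ^ 3 + 3 * (B n x' t + 2 * B (n - 1) x' t) * B n x' t * B (n - 1) x' t
          - 3 * (B n x' t + B (n - 1) x' t) * deriv (fun x'' => B (n - 1) x'' t) x'
          + deriv (fun x'' => deriv (fun x''' => B (n - 1) x''' t) x'') x') x := by
  have H : ∀ (m : ℤ) (y : ℝ), HasDerivAt (fun z => B m z t)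
      (B m y t * (B (m + 1) y t - B (m - 1) y t)) y := by
    intro m y
    rw [← hx m y t]
    apply DifferentiableAt.hasDerivAt
    have h1 : Differentiable ℝ (fun p : ℝ × ℝ => B m p.1 p.2) :=
      (hB m).differentiable (by simp)
    have h2 : Differentiable ℝ (fun z : ℝ => ((z, t) : ℝ × ℝ)) := by fun_prop
    exact (h1.comp h2) y
  -- second derivative in x
  have H2 : ∀ (m : ℤ) (y : ℝ), deriv (fun z => deriv (fun w => B m w t) z) y =
      B m y t * (B (m + 1) y t - B (m - 1) y t) ^ 2
      + B m y t * (B (m + 1) y t * (B (m + 2) y t - B m y t)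
        - B (m - 1) y t * (B m y t - B (m - 2) y t)) := by
    intro m y
    have e : (fun z => deriv (fun w => B m w t) z) =
        fun z => B m z t * (B (m + 1) z t - B (m - 1) z t) := by
      funext z; exact hx m z t
    rw [e]
    have h := (H m y).fun_mul ((H (m + 1) y).fun_sub (H (m - 1) y))
    rw [h.deriv, show m + 1 + 1 = m + 2 by ring, show m + 1 - 1 = m by ring,
      show m - 1 + 1 = m by ring, show m - 1 - 1 = m - 2 by ring]
    ring
  have P6 : ∀ (m : ℤ) (y : ℝ), V6 m y t = B m y t *
      (B (m - 1) y t * B (m + 1) y t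
        + B (m - 1) y t * (B (m - 2) y t + B (m - 1) y t + B m y t)
        + B m y t * (B (m - 1) y t + B m y t + B (m + 1) y t)
        + B (m + 1) y t * (B m y t + B (m + 1) y t + B (m + 2) y t)) := by
    intro m y
    rw [hV6, hV4, hV4, hV4, show m + 1 + 1 = m + 2 by ring, show m + 1 - 1 = m by ring,
      show m - 1 + 1 = m by ring, show m - 1 - 1 = m - 2 by ring]
  -- the third flow in conservation form
  have K : ∀ m : ℤ, deriv (fun s => B m x s) t = deriv (fun y => V6 m y t) x := by
    intro m
    have e : (fun y => V6 m y t) = _ := funext (P6 m)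
    have a0 := H m x
    have a1 := H (m + 1) x
    have a2 := H (m + 2) x
    have b1 := H (m - 1) x
    have b2 := H (m - 2) x
    have h := a0.fun_mul ((((b1.fun_mul a1).fun_add
      (b1.fun_mul ((b2.fun_add b1).fun_add a0))).fun_add
      (a0.fun_mul ((b1.fun_add a0).fun_add a1))).fun_add
      (a1.fun_mul ((a0.fun_add a1).fun_add a2)))
    rw [e, h.deriv, ht, P6, P6, show m + 1 + 1 = m + 2 by ring, show m + 1 - 1 = m by ring,
      show m - 1 + 1 = m by ring, show m - 1 - 1 = m - 2 by ring,
      show m + 1 + 2 = m + 3 by ring, show m + 1 - 2 = m - 1 by ring,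
      show m - 1 + 2 = m + 1 by ring, show m - 1 - 2 = m - 3 by ring,
      show m + 2 + 1 = m + 3 by ring, show m + 2 - 1 = m + 1 by ring,
      show m - 2 + 1 = m - 1 by ring, show m - 2 - 1 = m - 3 by ring]
    ring
  constructor
  · rw [K]
    congr 1
    funext y
    rw [P6, H2, hx]
    ring
  · rw [K]
    congr 1
    funext y
    rw [P6, H2, hx, show n - 1 + 1 = n by ring]
    ring
end

section
/- Let B_m : ℝ³ → ℝ (m ∈ ℤ) be smooth functions of (x, y, t) such that for every m ∈ ℤ the first three flows of the Volterra hierarchy hold: ∂_x B_m = B_m (B_{m+1} − B_{m−1}), ∂_y B_m = B_m (V4_{m+1} − V4_{m−1}), and ∂_t B_m = B_m (V6_{m+1} − V6_{m−1}). Then for every n ∈ ℤ the function φ := B_n is a solution of the modified Kadomtsev–Petviashvili equation: setting ψ := B_{n−1} and ξ := φ² + 2 φ ψ + ∂_x φ, one has ∂_y φ = ∂_x ξ and 4 ∂_t φ = 6 (∂_x φ)(ξ − φ²) + ∂_x³ φ + 3 ∂_y ξ. -/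
/-- If the family `B m` solves the first three flows of the Volterra
hierarchy (with respect to `x = t₂`, `y = t₄`, `t = t₆`), then for every `n` the function
`φ = B n` solves the modified Kadomtsev–Petviashvili equation, with
`ξ = φ² + 2 φ ψ + ∂ₓ φ` and `ψ = B (n-1)`. -/
theorem volterra_solves_mKP
    (B V4 V6 : ℤ → ℝ → ℝ → ℝ → ℝ)
    (hB : ∀ m : ℤ, ContDiff ℝ (⊤ : ℕ∞) (fun p : ℝ × ℝ × ℝ => B m p.1 p.2.1 p.2.2))
    (hV4 : ∀ (m : ℤ) (x y t : ℝ),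
      V4 m x y t = B m x y t * (B (m - 1) x y t + B m x y t + B (m + 1) x y t))
    (hV6 : ∀ (m : ℤ) (x y t : ℝ),
      V6 m x y t = B m x y t *
        (B (m - 1) x y t * B (m + 1) x y t
          + V4 (m - 1) x y t + V4 m x y t + V4 (m + 1) x y t))
    (hx : ∀ (m : ℤ) (x y t : ℝ),
      deriv (fun x' => B m x' y t) x = B m x y t * (B (m + 1) x y t - B (m - 1) x y t))
    (hy : ∀ (m : ℤ) (x y t : ℝ),
      deriv (fun y' => B m x y' t) y = B m x y t * (V4 (m + 1) x y t - V4 (m - 1) x y t))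
    (ht : ∀ (m : ℤ) (x y t : ℝ),
      deriv (fun t' => B m x y t') t = B m x y t * (V6 (m + 1) x y t - V6 (m - 1) x y t))
    (n : ℤ)
    (ξ : ℝ → ℝ → ℝ → ℝ)
    (hξ : ∀ x y t : ℝ,
      ξ x y t = B n x y t ^ 2 + 2 * B n x y t * B (n - 1) x y t
        + deriv (fun x' => B n x' y t) x) :
    (∀ x y t : ℝ,
      deriv (fun y' => B n x y' t) y = deriv (fun x' => ξ x' y t) x)
    ∧
    (∀ x y t : ℝ,
      4 * deriv (fun t' => B n x y t') t =
        6 * deriv (fun x' => B n x' y t) x * (ξ x y t - B n x y t ^ 2)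
          + deriv (fun x' => deriv (fun x'' => deriv (fun x''' => B n x''' y t) x'') x') x
          + 3 * deriv (fun y' => ξ x y' t) y) := by
  have dX : ∀ (m : ℤ) (x y t : ℝ), HasDerivAt (fun x' => B m x' y t)
      (B m x y t * (B (m + 1) x y t - B (m - 1) x y t)) x := by
    intro m x y t
    rw [← hx]
    have h1 : Differentiable ℝ (fun p : ℝ × ℝ × ℝ => B m p.1 p.2.1 p.2.2) :=
      (hB m).differentiable (by simp)
    have h2 : Differentiable ℝ (fun x' : ℝ => ((x', y, t) : ℝ × ℝ × ℝ)) := by fun_prop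
    exact ((h1.comp h2) x).hasDerivAt
  have dY : ∀ (m : ℤ) (x y t : ℝ), HasDerivAt (fun y' => B m x y' t)
      (B m x y t * (V4 (m + 1) x y t - V4 (m - 1) x y t)) y := by
    intro m x y t
    rw [← hy]
    have h1 : Differentiable ℝ (fun p : ℝ × ℝ × ℝ => B m p.1 p.2.1 p.2.2) :=
      (hB m).differentiable (by simp)
    have h2 : Differentiable ℝ (fun y' : ℝ => ((x, y', t) : ℝ × ℝ × ℝ)) := by fun_prop
    exact ((h1.comp h2) y).hasDerivAt
  have hξ' : ∀ x y t : ℝ,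
      ξ x y t = B n x y t * (B (n - 1) x y t + B n x y t + B (n + 1) x y t) := by
    intro x y t
    rw [hξ, hx]; ring
  have i1 : n + 1 - 1 = n := by ring
  have i2 : n - 1 + 1 = n := by ring
  have i3 : n + 1 + 1 = n + 2 := by ring
  have i4 : n - 1 - 1 = n - 2 := by ring
  have i5 : n + 2 - 1 = n + 1 := by ring
  have i6 : n - 2 + 1 = n - 1 := by ring
  have i7 : n + 2 + 1 = n + 3 := by ring
  have i8 : n - 2 - 1 = n - 3 := by ring
  constructor
  · intro x y t
    have h := (dX n x y t).mul (((dX (n - 1) x y t).add (dX n x y t)).add (dX (n + 1) x y t))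
    have e : (fun x' => ξ x' y t) = (fun x' => B n x' y t) *
        ((fun x' => B (n - 1) x' y t) + (fun x' => B n x' y t)
          + (fun x' => B (n + 1) x' y t)) := by
      funext x'; simp [hξ']
    rw [e, h.deriv, hy]
    simp only [hV4, i1, i2, i3, i4, Pi.add_apply]
    ring
  · intro x y t
    have hY := (dY n x y t).mul (((dY (n - 1) x y t).add (dY n x y t)).add (dY (n + 1) x y t))
    have eY : (fun y' => ξ x y' t) = (fun y' => B n x y' t) *
        ((fun y' => B (n - 1) x y' t) + (fun y' => B n x y' t)
          + (fun y' => B (n + 1) x y' t)) := by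
      funext y'; simp [hξ']
    have h2 : ∀ x' : ℝ, deriv (fun x'' => B n x'' y t *
        (B (n + 1) x'' y t - B (n - 1) x'' y t)) x' = B n x' y t *
        ((B (n + 1) x' y t - B (n - 1) x' y t) * (B (n + 1) x' y t - B (n - 1) x' y t)
          + (B (n + 1) x' y t * (B (n + 2) x' y t - B n x' y t)
            - B (n - 1) x' y t * (B n x' y t - B (n - 2) x' y t))) := by
      intro x'
      have h := (dX n x' y t).mul ((dX (n + 1) x' y t).sub (dX (n - 1) x' y t))
      refine (HasDerivAt.deriv (h.congr_deriv ?_))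
      simp only [i1, i2, i3, i4, Pi.sub_apply]
      ring
    have d0 := dX n x y t
    have dp := dX (n + 1) x y t
    have dm := dX (n - 1) x y t
    have dpp := dX (n + 2) x y t
    have dmm := dX (n - 2) x y t
    have h3 := d0.mul (((dp.sub dm).mul (dp.sub dm)).add
      ((dp.mul (dpp.sub d0)).sub (dm.mul (d0.sub dmm))))
    have e3 := h3.deriv
    simp only [hx, h2]
    rw [eY, hY.deriv, ht]
    refine Eq.trans ?_ (congrArg (fun z => _ + z + _) e3.symm)
    simp only [hξ', hV6, hV4, i1, i2, i3, i4, i5, i6, i7, i8, Pi.add_apply, Pi.sub_apply,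
      Pi.mul_apply]
    ring
end

section
/- Define the skew-symmetric inner product ⟨f, g⟩ := (1/2) ∫_{ℝ²} f(x) g(y) sgn(y − x) exp(−(x² + y²)/2) dx dy, and the polynomials Q_{2n}(z) := P_{2n}(z) and Q_{2n+1}(z) := P_{2n+1}(z) − n P_{2n−1}(z) for n ≥ 0. Then the family {Qₙ} is skew-orthogonal: for all m, n ≥ 0, ⟨Q_{2m}, Q_{2n}⟩ = 0, ⟨Q_{2m+1}, Q_{2n+1}⟩ = 0, and ⟨Q_{2m}, Q_{2n+1}⟩ = ν_n if m = n and 0 otherwise. -/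
open MeasureTheory

noncomputable section

/-- Monic Hermite polynomials for the weight `exp(−x²)`:
`P₀ = 1`, `P₁ = X`, `P_{n+1} = X P_n − (n/2) P_{n−1}`. -/
def hermiteP : ℕ → Polynomial ℝ
  | 0 => 1
  | 1 => Polynomial.X
  | n + 2 => Polynomial.X * hermiteP (n + 1) - Polynomial.C ((n + 1 : ℝ) / 2) * hermiteP n

/-- The normalisation constants `ν_n = √π (2n)! / 2^{2n}`. -/
def nuGOE (n : ℕ) : ℝ := Real.sqrt Real.pi * (2 * n).factorial / 2 ^ (2 * n)

/-- The monic skew-orthogonal polynomials: `Q_{2n} = P_{2n}` and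
`Q_{2n+1} = P_{2n+1} − n P_{2n−1}`. -/
def QGOE (m : ℕ) : Polynomial ℝ :=
  if m % 2 = 0 then hermiteP m
  else hermiteP m - Polynomial.C ((m / 2 : ℕ) : ℝ) * hermiteP (m - 2)

/-- The skew-symmetric inner product
`⟨f, g⟩ = (1/2) ∫_{ℝ²} f(x) g(y) sgn(y − x) exp(−(x² + y²)/2) dx dy`. -/
def skewInner (f g : Polynomial ℝ) : ℝ :=
  (1 / 2) *
    ∫ p : ℝ × ℝ,
      f.eval p.1 * g.eval p.2 * Real.sign (p.2 - p.1) *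
        Real.exp (-(p.1 ^ 2 + p.2 ^ 2) / 2)

lemma halves {f f' : ℝ → ℝ} (hd : ∀ x, HasDerivAt f (f' x) x) (hf' : Integrable f')
    (hf : Integrable f) (x : ℝ) :
    (∫ y in Set.Ioi x, f' y = - f x) ∧ (∫ y in Set.Iic x, f' y = f x) := by
  have h1 := tendsto_zero_of_hasDerivAt_of_integrableOn_Ioi (a := x) (fun y _ => hd y)
    hf'.integrableOn hf.integrableOn
  have h2 := tendsto_zero_of_hasDerivAt_of_integrableOn_Iic (a := x) (fun y _ => hd y)
    hf'.integrableOn hf.integrableOn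
  constructor
  · rw [integral_Ioi_of_hasDerivAt_of_tendsto' (fun y _ => hd y) hf'.integrableOn h1]; ring
  · rw [integral_Iic_of_hasDerivAt_of_tendsto' (fun y _ => hd y) hf'.integrableOn h2]; ring

lemma int_poly (p : Polynomial ℝ) {b : ℝ} (hb : 0 < b) :
    Integrable fun x : ℝ => p.eval x * Real.exp (-b * x ^ 2) := by
  simp_rw [Polynomial.eval_eq_sum_range, Finset.sum_mul]
  refine integrable_finsetSum _ fun i _ => ?_
  have h := (integrable_rpow_mul_exp_neg_mul_sq hb (s := (i : ℝ))
    (by have : (0 : ℝ) ≤ i := by positivity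
        linarith)).const_mul (p.coeff i)
  refine h.congr (Filter.Eventually.of_forall fun x => ?_)
  change _ * (x ^ (i : ℝ) * _) = _
  rw [Real.rpow_natCast]
  ring

lemma deriv_poly (p : Polynomial ℝ) (b x : ℝ) :
    HasDerivAt (fun x : ℝ => p.eval x * Real.exp (-b * x ^ 2))
      ((p.derivative - Polynomial.C (2 * b) * Polynomial.X * p).eval x
        * Real.exp (-b * x ^ 2)) x := by
  have h1 := p.hasDerivAt x
  have h2 : HasDerivAt (fun x : ℝ => Real.exp (-b * x ^ 2))
      (Real.exp (-b * x ^ 2) * (-b * (2 * x))) x := by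
    have := (((hasDerivAt_id x).pow 2).const_mul (-b)).exp
    simpa using this
  refine (h1.mul h2).congr_deriv ?_
  simp only [Polynomial.eval_sub, Polynomial.eval_mul, Polynomial.eval_C, Polynomial.eval_X]
  ring

def gI (p : Polynomial ℝ) : ℝ := ∫ x : ℝ, p.eval x * Real.exp (-1 * x ^ 2)

lemma gI_sub (p q : Polynomial ℝ) : gI (p - q) = gI p - gI q := by
  unfold gI
  rw [← integral_sub (int_poly p one_pos) (int_poly q one_pos)]
  simp [sub_mul]

lemma gI_C (c : ℝ) (p : Polynomial ℝ) : gI (Polynomial.C c * p) = c * gI p := by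
  unfold gI
  rw [← integral_const_mul]
  simp [mul_assoc]

lemma gI_add (p q : Polynomial ℝ) : gI (p + q) = gI p + gI q := by
  unfold gI
  rw [← integral_add (int_poly p one_pos) (int_poly q one_pos)]
  simp [add_mul]

lemma gI_parts (p : Polynomial ℝ) : gI (Polynomial.X * p) = gI p.derivative / 2 := by
  have h := halves (deriv_poly p 1) (int_poly _ one_pos) (int_poly _ one_pos) 0
  have h3 := intervalIntegral.integral_Iic_add_Ioi (b := (0:ℝ)) (μ := volume)
    (int_poly (p.derivative - Polynomial.C (2 * 1) * Polynomial.X * p) one_pos).integrableOn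
    (int_poly (p.derivative - Polynomial.C (2 * 1) * Polynomial.X * p) one_pos).integrableOn
  rw [h.1, h.2, add_neg_cancel] at h3
  change 0 = gI _ at h3
  rw [gI_sub, mul_assoc, gI_C] at h3
  linarith

lemma hermiteP_deriv (n : ℕ) :
    (hermiteP (n + 1)).derivative = Polynomial.C (n + 1 : ℝ) * hermiteP n := by
  induction n using Nat.strong_induction_on with
  | _ n ih =>
    match n with
    | 0 => simp [hermiteP]
    | 1 => apply Polynomial.funext; intro x; simp [hermiteP]; ring
    | n + 2 =>
      rw [hermiteP, Polynomial.derivative_sub, Polynomial.derivative_mul,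
        Polynomial.derivative_C_mul, ih (n + 1) (by omega), ih n (by omega), hermiteP]
      apply Polynomial.funext
      intro x
      simp
      ring

lemma hermiteP_succ (n : ℕ) : hermiteP (n + 1) =
    Polynomial.X * hermiteP n - Polynomial.C (1 / 2) * (hermiteP n).derivative := by
  match n with
  | 0 => simp [hermiteP]
  | n + 1 =>
    rw [hermiteP_deriv, hermiteP, ← mul_assoc, ← Polynomial.C_mul]
    ring_nf

lemma gI_succ (q : Polynomial ℝ) (n : ℕ) :
    gI (q * hermiteP (n + 1)) = gI (q.derivative * hermiteP n) / 2 := by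
  have e : q * hermiteP (n + 1) = Polynomial.X * (q * hermiteP n)
      - Polynomial.C (1 / 2) * (q * (hermiteP n).derivative) := by
    rw [hermiteP_succ]; ring
  rw [e, gI_sub, gI_C, gI_parts, Polynomial.derivative_mul, gI_add]
  ring

lemma gI_orth (n : ℕ) : ∀ m, gI (hermiteP m * hermiteP n) =
    if m = n then Real.sqrt Real.pi * n.factorial / 2 ^ n else 0 := by
  have h0 : ∀ n, gI (hermiteP 0 * hermiteP (n + 1)) = 0 := by
    intro n
    rw [gI_succ]
    simp [hermiteP, gI]
  induction n with
  | zero =>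
    intro m
    cases m with
    | zero =>
      have := integral_gaussian 1
      simp at this
      simp [hermiteP, gI, this]
    | succ m => rw [mul_comm, h0]; simp
  | succ n ih =>
    intro m
    cases m with
    | zero => rw [h0]; simp
    | succ m =>
      rw [gI_succ, hermiteP_deriv, mul_assoc, gI_C, ih m]
      by_cases h : m = n
      · subst h
        simp [Nat.factorial_succ, pow_succ]
        ring
      · simp [h]

lemma hermiteP_parity (n : ℕ) (x : ℝ) :
    (hermiteP n).eval (-x) = (-1) ^ n * (hermiteP n).eval x := by
  induction n using Nat.strong_induction_on with
  | _ n ih =>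
    match n with
    | 0 => simp [hermiteP]
    | 1 => simp [hermiteP]
    | n + 2 =>
      simp only [hermiteP, Polynomial.eval_sub, Polynomial.eval_mul, Polynomial.eval_C,
        Polynomial.eval_X]
      rw [ih (n + 1) (by omega), ih n (by omega)]
      ring

lemma QGOE_even (n : ℕ) : QGOE (2 * n) = hermiteP (2 * n) := by simp [QGOE]

lemma QGOE_odd (n : ℕ) : QGOE (2 * n + 1) =
    Polynomial.X * hermiteP (2 * n) - (hermiteP (2 * n)).derivative := by
  have h1 : (2 * n + 1) % 2 = 1 := by omega
  have h2 : (2 * n + 1) / 2 = n := by omega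
  rw [QGOE, h1, h2]
  cases n with
  | zero => simp [hermiteP]
  | succ k =>
    have h3 : 2 * (k + 1) + 1 - 2 = 2 * k + 1 := by omega
    have h4 : 2 * (k + 1) = 2 * k + 1 + 1 := by omega
    rw [h3, h4, hermiteP_deriv, hermiteP]
    apply Polynomial.funext
    intro x
    simp
    ring

lemma QGOE_odd_parity (n : ℕ) (x : ℝ) :
    (QGOE (2 * n + 1)).eval (-x) = - (QGOE (2 * n + 1)).eval x := by
  have h1 : (2 * n + 1) % 2 = 1 := by omega
  have h2 : (2 * n + 1) / 2 = n := by omega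
  rw [QGOE, h1, h2]
  cases n with
  | zero => simp [hermiteP]
  | succ k =>
    have h3 : 2 * (k + 1) + 1 - 2 = 2 * k + 1 := by omega
    rw [h3]
    simp [hermiteP_parity, pow_succ, pow_mul]
    ring

lemma skew_parity (f g : Polynomial ℝ)
    (h : ∀ x y, f.eval (-x) * g.eval (-y) = f.eval x * g.eval y) : skewInner f g = 0 := by
  unfold skewInner
  have := integral_neg_eq_self (fun p : ℝ × ℝ =>
      f.eval p.1 * g.eval p.2 * Real.sign (p.2 - p.1) *
        Real.exp (-(p.1 ^ 2 + p.2 ^ 2) / 2)) volume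
  simp only [Prod.fst_neg, Prod.snd_neg, h, neg_sq] at this
  have e : ∀ p : ℝ × ℝ, Real.sign (-p.2 - -p.1) = - Real.sign (p.2 - p.1) := by
    intro p
    rw [← Real.sign_neg]; ring_nf
  simp only [e, mul_neg, neg_mul, integral_neg] at this
  linarith

lemma measurable_rsign : Measurable Real.sign := by
  unfold Real.sign
  exact Measurable.ite measurableSet_Iio measurable_const
    (Measurable.ite measurableSet_Ioi measurable_const measurable_const)

lemma abs_rsign_le (x : ℝ) : |Real.sign x| ≤ 1 := by
  rcases Real.sign_apply_eq x with h | h | h <;> simp [h]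

lemma inner_int (n : ℕ) (x : ℝ) :
    ∫ y, (QGOE (2 * n + 1)).eval y * Real.sign (y - x) * Real.exp (-(1 / 2) * y ^ 2)
      = 2 * ((hermiteP (2 * n)).eval x * Real.exp (-(1 / 2) * x ^ 2)) := by
  have hb : (0 : ℝ) < 1 / 2 := by norm_num
  set Q := QGOE (2 * n + 1) with hQ
  have hd : ∀ x, HasDerivAt
      (fun x : ℝ => (-hermiteP (2 * n)).eval x * Real.exp (-(1 / 2) * x ^ 2))
      (Q.eval x * Real.exp (-(1 / 2) * x ^ 2)) x := by
    intro x
    convert deriv_poly (-hermiteP (2 * n)) (1 / 2) x using 3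
    rw [hQ, QGOE_odd]
    simp
    ring
  obtain ⟨h1, h2⟩ := halves hd (int_poly _ hb) (int_poly _ hb) x
  have hi : Integrable fun y => Q.eval y * Real.sign (y - x) * Real.exp (-(1 / 2) * y ^ 2) := by
    have := (int_poly Q hb).bdd_mul (f := fun y => Real.sign (y - x)) (c := 1)
      (measurable_rsign.comp (measurable_id.sub_const x)).aestronglyMeasurable
      (Filter.Eventually.of_forall fun y => abs_rsign_le _)
    convert this using 2
    ring
  rw [← intervalIntegral.integral_Iic_add_Ioi (b := x) hi.integrableOn hi.integrableOn]
  have e1 : ∫ y in Set.Ioi x, Q.eval y * Real.sign (y - x) * Real.exp (-(1 / 2) * y ^ 2)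
      = ∫ y in Set.Ioi x, Q.eval y * Real.exp (-(1 / 2) * y ^ 2) := by
    refine setIntegral_congr_fun measurableSet_Ioi fun y hy => ?_
    have : Real.sign (y - x) = 1 := Real.sign_of_pos (sub_pos.2 hy)
    simp [this]
  have e2 : ∫ y in Set.Iic x, Q.eval y * Real.sign (y - x) * Real.exp (-(1 / 2) * y ^ 2)
      = - ∫ y in Set.Iic x, Q.eval y * Real.exp (-(1 / 2) * y ^ 2) := by
    rw [integral_Iic_eq_integral_Iio, integral_Iic_eq_integral_Iio, ← integral_neg]
    refine setIntegral_congr_fun measurableSet_Iio fun y hy => ?_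
    have : Real.sign (y - x) = -1 := Real.sign_of_neg (sub_neg.2 hy)
    simp [this]
  rw [e1, e2, h1, h2, Polynomial.eval_neg]
  ring

lemma skew_odd (f : Polynomial ℝ) (n : ℕ) :
    skewInner f (QGOE (2 * n + 1)) = gI (f * hermiteP (2 * n)) := by
  have hb : (0 : ℝ) < 1 / 2 := by norm_num
  have hexp : ∀ x y : ℝ, Real.exp (-(x ^ 2 + y ^ 2) / 2) =
      Real.exp (-(1 / 2) * x ^ 2) * Real.exp (-(1 / 2) * y ^ 2) := by
    intro x y
    rw [← Real.exp_add]; ring_nf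
  unfold skewInner
  have hi : Integrable (fun p : ℝ × ℝ =>
      f.eval p.1 * (QGOE (2 * n + 1)).eval p.2 * Real.sign (p.2 - p.1) *
        Real.exp (-(p.1 ^ 2 + p.2 ^ 2) / 2)) (volume.prod volume) := by
    have := ((int_poly f hb).mul_prod (int_poly (QGOE (2 * n + 1)) hb)).bdd_mul
      (f := fun p : ℝ × ℝ => Real.sign (p.2 - p.1)) (c := 1)
      (measurable_rsign.comp (measurable_snd.sub measurable_fst)).aestronglyMeasurable
      (Filter.Eventually.of_forall fun y => abs_rsign_le _)
    convert this using 2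
    rw [hexp]
    ring
  rw [Measure.volume_eq_prod, integral_prod _ hi]
  have e : ∀ x : ℝ, ∫ y, f.eval x * (QGOE (2 * n + 1)).eval y * Real.sign (y - x) *
        Real.exp (-(x ^ 2 + y ^ 2) / 2) =
      2 * ((f * hermiteP (2 * n)).eval x * Real.exp (-1 * x ^ 2)) := by
    intro x
    have h1 : Real.exp (-1 * x ^ 2) =
      Real.exp (-(1 / 2) * x ^ 2) * Real.exp (-(1 / 2) * x ^ 2) := by
      rw [← Real.exp_add]; ring_nf
    calc _ = ∫ y, (f.eval x * Real.exp (-(1 / 2) * x ^ 2)) *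
          ((QGOE (2 * n + 1)).eval y * Real.sign (y - x) * Real.exp (-(1 / 2) * y ^ 2)) := by
          congr 1; ext y; rw [hexp]; ring
      _ = _ := by
          rw [integral_const_mul, inner_int, h1, Polynomial.eval_mul]; ring
  simp only [e]
  rw [integral_const_mul]
  unfold gI
  ring

/-- The family `{Qₙ}` is skew-orthogonal for `⟨·,·⟩`:
`⟨Q_{2m}, Q_{2n}⟩ = 0`, `⟨Q_{2m+1}, Q_{2n+1}⟩ = 0`, and
`⟨Q_{2m}, Q_{2n+1}⟩ = ν_n δ_{mn}`. -/
theorem QGOE_skew_orthogonal :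
    ∀ m n : ℕ,
      skewInner (QGOE (2 * m)) (QGOE (2 * n)) = 0 ∧
      skewInner (QGOE (2 * m + 1)) (QGOE (2 * n + 1)) = 0 ∧
      skewInner (QGOE (2 * m)) (QGOE (2 * n + 1)) = (if m = n then nuGOE n else 0) := by
  intro m n
  refine ⟨?_, ?_, ?_⟩
  · apply skew_parity
    intro x y
    simp [QGOE_even, hermiteP_parity]
  · apply skew_parity
    intro x y
    simp [QGOE_odd_parity]
  · rw [skew_odd, QGOE_even, gI_orth, nuGOE]
    simp

end
end

section
/- Let a, b, h : ℝ² → ℝ be continuously differentiable functions of (x, t) such that: (1) b ∂_x a = a ∂_x b everywhere; (2) ∂_t a = a ∂_x(h b) everywhere; (3) ∂_x(a b + b²) = 0 everywhere; (4) ∂_t b = b ∂_x(h b) everywhere; (5) b(x, t) ≠ 0 for all (x, t); and (6) there exist t₀, x₁, x₂ with b(x₁, t₀)² ≠ b(x₂, t₀)². Then a = −b identically on ℝ². -/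
/-- The order `ε⁻¹` constraint in the singular continuum limit of the
reduced even Pfaff lattice: under the stated relations for `a = U^{−2}_{−1}`,
`b = U⁰_{−1}`, `h = U¹_0`, one concludes `a = −b` identically. -/
theorem singular_limit_leading_order_constraint
    (a b h : ℝ → ℝ → ℝ)
    (ha : ContDiff ℝ 1 (fun p : ℝ × ℝ => a p.1 p.2))
    (hb : ContDiff ℝ 1 (fun p : ℝ × ℝ => b p.1 p.2))
    (hh : ContDiff ℝ 1 (fun p : ℝ × ℝ => h p.1 p.2))
    (h1 : ∀ x t : ℝ,
      b x t * deriv (fun x' => a x' t) x = a x t * deriv (fun x' => b x' t) x)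
    (h2 : ∀ x t : ℝ,
      deriv (fun t' => a x t') t = a x t * deriv (fun x' => h x' t * b x' t) x)
    (h3 : ∀ x t : ℝ,
      deriv (fun x' => a x' t * b x' t + (b x' t) ^ 2) x = 0)
    (h4 : ∀ x t : ℝ,
      deriv (fun t' => b x t') t = b x t * deriv (fun x' => h x' t * b x' t) x)
    (h5 : ∀ x t : ℝ, b x t ≠ 0)
    (h6 : ∃ t₀ x₁ x₂ : ℝ, (b x₁ t₀) ^ 2 ≠ (b x₂ t₀) ^ 2) :
    ∀ x t : ℝ, a x t = - b x t := by
  have hax : ∀ t, Differentiable ℝ (fun x => a x t) := fun t =>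
    (ha.differentiable (by norm_num)).comp
      (differentiable_id.prodMk (differentiable_const t) : Differentiable ℝ fun x : ℝ => (x, t))
  have hbx : ∀ t, Differentiable ℝ (fun x => b x t) := fun t =>
    (hb.differentiable (by norm_num)).comp
      (differentiable_id.prodMk (differentiable_const t) : Differentiable ℝ fun x : ℝ => (x, t))
  have hat : ∀ x, Differentiable ℝ (fun t => a x t) := fun x =>
    (ha.differentiable (by norm_num)).comp
      ((differentiable_const x).prodMk differentiable_id : Differentiable ℝ fun t : ℝ => (x, t))
  have hbt : ∀ x, Differentiable ℝ (fun t => b x t) := fun x =>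
    (hb.differentiable (by norm_num)).comp
      ((differentiable_const x).prodMk differentiable_id : Differentiable ℝ fun t : ℝ => (x, t))
  have cx : ∀ t x y, a x t / b x t = a y t / b y t := by
    intro t
    have hd : Differentiable ℝ (fun x => a x t / b x t) :=
      fun x => ((hax t x).div (hbx t x) (h5 x t))
    refine is_const_of_deriv_eq_zero hd (fun x => ?_)
    have := ((hax t x).hasDerivAt.fun_div (hbx t x).hasDerivAt (h5 x t)).deriv
    rw [this, div_eq_zero_iff]
    left
    linear_combination h1 x t
  have ct : ∀ x t s, a x t / b x t = a x s / b x s := by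
    intro x
    have hd : Differentiable ℝ (fun t => a x t / b x t) :=
      fun t => ((hat x t).div (hbt x t) (h5 x t))
    refine is_const_of_deriv_eq_zero hd (fun t => ?_)
    have := ((hat x t).hasDerivAt.fun_div (hbt x t).hasDerivAt (h5 x t)).deriv
    rw [this, div_eq_zero_iff, h2, h4]
    left
    ring
  obtain ⟨t₀, x₁, x₂, hne⟩ := h6
  have hq : a x₁ t₀ * b x₁ t₀ + (b x₁ t₀) ^ 2 = a x₂ t₀ * b x₂ t₀ + (b x₂ t₀) ^ 2 :=
    is_const_of_deriv_eq_zero (f := fun x' => a x' t₀ * b x' t₀ + (b x' t₀) ^ 2)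
      (((hax t₀).mul (hbx t₀)).add ((hbx t₀).pow 2)) (fun x => h3 x t₀) x₁ x₂
  have key : ∀ x t, a x t = (a x₁ t₀ / b x₁ t₀) * b x t := by
    intro x t
    rw [← cx t₀ x x₁, ← ct x t t₀, div_mul_cancel₀ _ (h5 x t)]
  generalize a x₁ t₀ / b x₁ t₀ = c at key
  rw [key x₁ t₀, key x₂ t₀] at hq
  have hc : (c + 1) * ((b x₁ t₀) ^ 2 - (b x₂ t₀) ^ 2) = 0 := by linear_combination hq
  have hc1 : c + 1 = 0 := (mul_eq_zero.mp hc).resolve_right (sub_ne_zero.mpr hne)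
  intro x t
  rw [key x t]
  linear_combination b x t * hc1
end

section
/- Let A = A(u) be the coefficient matrix of the hydrodynamic chain (entries listed in the context), depending on u : ℤ → ℝ. For i, j, k ∈ ℤ define the Nijenhuis tensor N^i_{jk}(u) := Σ_p ( A^p_j ∂_p A^i_k − A^p_k ∂_p A^i_j ) − Σ_p A^i_p ( ∂_j A^p_k − ∂_k A^p_j ) and the Haantjes tensor H^i_{jk}(u) := Σ_{p,r} ( N^i_{pr} A^p_j A^r_k − N^p_{jr} A^i_p A^r_k − N^p_{rk} A^i_p A^r_j + N^p_{jk} A^i_r A^r_p ), where ∂_m denotes the derivative of an entry with respect to the coordinate u^m (each entry is a polynomial in finitely many coordinates, so ∂_m F(u) := d/ds F(u + s·e_m)|_{s=0} with e_m the indicator function of m), and all the sums over ℤ have only finitely many nonzero terms. Then for every u : ℤ → ℝ and all i, j, k ∈ ℤ, H^i_{jk}(u) = 0; i.e., the Haantjes tensor of the hydrodynamic chain vanishes identically, so the chain is diagonalisable. -/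
noncomputable section

/-- The coefficient matrix `A(u)` of the hydrodynamic chain arising as the continuum
limit of the reduced even Pfaff lattice; rows `i ∈ ℤ`, columns `j ∈ ℤ`
(entries prescribed by two rules at the same position are added). -/
def Achain (u : ℤ → ℝ) (i j : ℤ) : ℝ :=
  (if i = 0 ∧ j = 0 then u 0 * u 1 else 0)
  + (if i = 0 ∧ j = 1 then (u 0) ^ 2 else 0)
  + (if i = 1 ∧ j = 0 then 2 * u 2 - (u 1) ^ 2 else 0)
  + (if 2 ≤ i ∧ j = 0 then
      ((i : ℝ) + 1) * u (i + 1) - ((i : ℝ) - 1) * u (i - 1) - u i * u 1 else 0)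
  + (if 1 ≤ i ∧ j = 1 then -(u 0 * u i) else 0)
  + (if 1 ≤ i ∧ j = i + 1 then u 0 else 0)
  + (if 2 ≤ i ∧ j = i - 1 then u 0 else 0)
  + (if i = -1 ∧ j = 0 then u (-1) * u 1 + u (-2) else 0)
  + (if i = -2 ∧ j = 0 then u (-2) * u 1 + 2 * u (-3) else 0)
  + (if i ≤ -3 ∧ j = 0 then
      u i * u 1 + (-(i : ℝ)) * u (i - 1) - (-(i : ℝ) - 2) * u (i + 1) else 0)
  + (if i ≤ -1 ∧ j = 1 then u 0 * u i else 0)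
  + (if i ≤ -1 ∧ j = i - 1 then u 0 else 0)
  + (if i = -2 ∧ j = -1 then 2 * u 0 else 0)
  + (if i ≤ -3 ∧ j = i + 1 then u 0 else 0)

/-- The partial derivative `∂_m F(u)` of a functional of `u : ℤ → ℝ` with respect to the
coordinate `u^m`: the derivative at `s = 0` of `s ↦ F(u + s·e_m)`. -/
def pderivU (F : (ℤ → ℝ) → ℝ) (u : ℤ → ℝ) (m : ℤ) : ℝ :=
  deriv (fun s : ℝ => F (fun i => u i + s * (if i = m then 1 else 0))) 0

/-- The Nijenhuis tensor `N^i_{jk}(u)` of the matrix `A(u)`; all the sums over `ℤ`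
have only finitely many nonzero terms. -/
def nijenhuis (u : ℤ → ℝ) (i j k : ℤ) : ℝ :=
  (∑ᶠ p : ℤ,
      (Achain u p j * pderivU (fun v => Achain v i k) u p
        - Achain u p k * pderivU (fun v => Achain v i j) u p))
    - ∑ᶠ p : ℤ,
        Achain u i p *
          (pderivU (fun v => Achain v p k) u j - pderivU (fun v => Achain v p j) u k)

/-- The Haantjes tensor `H^i_{jk}(u)` of the matrix `A(u)`. -/
def haantjes (u : ℤ → ℝ) (i j k : ℤ) : ℝ :=
  ∑ᶠ p : ℤ, ∑ᶠ r : ℤ,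
    (nijenhuis u i p r * Achain u p j * Achain u r k
      - nijenhuis u p j r * Achain u i p * Achain u r k
      - nijenhuis u p r k * Achain u i p * Achain u r j
      + nijenhuis u p j k * Achain u i r * Achain u r p)

/-! ### Helper material -/

/-- Kronecker delta. -/
def eD (m j : ℤ) : ℝ := if j = m then 1 else 0

/-- Sign of the row. -/
def sgC (i : ℤ) : ℝ := if 1 ≤ i then -1 else 1

/-- Coefficient of `u (i+1)` in column zero. -/
def cC (i : ℤ) : ℝ := if 1 ≤ i then (i : ℝ) + 1 else if i ≤ -2 then (i : ℝ) + 2 else 0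

/-- Coefficient of `u (i-1)` in column zero. -/
def dC (i : ℤ) : ℝ := if 1 ≤ i then 1 - (i : ℝ) else -(i : ℝ)

/-- Superdiagonal coefficient. -/
def tC (i : ℤ) : ℝ := if 1 ≤ i then 1 else if i = -2 then 2 else if i ≤ -3 then 1 else 0

/-- Subdiagonal coefficient. -/
def wC (i : ℤ) : ℝ := if 2 ≤ i then 1 else if i ≤ -1 then 1 else 0

/-- The one-form `d(u⁰u¹)`. -/
def bC (u : ℤ → ℝ) (j : ℤ) : ℝ := u 1 * eD 0 j + u 0 * eD 1 j

/-- The derivative of the entries. -/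
def dA (u : ℤ → ℝ) (i j m : ℤ) : ℝ :=
  sgC i * bC u j * eD i m + sgC i * u i * eD 0 j * eD 1 m + sgC i * u i * eD 1 j * eD 0 m
    + cC i * eD 0 j * eD (i + 1) m + dC i * eD 0 j * eD (i - 1) m
    + (tC i * eD (i + 1) j + wC i * eD (i - 1) j) * eD 0 m

lemma Achain_eq (u : ℤ → ℝ) (i j : ℤ) : Achain u i j =
    sgC i * u i * (u 1 * eD 0 j + u 0 * eD 1 j)
      + (cC i * u (i + 1) + dC i * u (i - 1)) * eD 0 j
      + u 0 * (tC i * eD (i + 1) j + wC i * eD (i - 1) j) := by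
  have hi : i ≤ -3 ∨ i = -2 ∨ i = -1 ∨ i = 0 ∨ i = 1 ∨ 2 ≤ i := by omega
  rcases hi with h | h | h | h | h | h
  · have h1 : ¬ (1 ≤ i) := by omega
    have h2 : ¬ (2 ≤ i) := by omega
    have h3 : i ≤ -2 := by omega
    have h4 : i ≤ -1 := by omega
    have h5 : i ≠ -2 := by omega
    have h6 : i ≠ -1 := by omega
    have h7 : i ≠ 0 := by omega
    have h8 : i ≠ 1 := by omega
    simp only [Achain, eD, sgC, cC, dC, tC, wC, h, h1, h2, h3, h4, h5, h6, h7, h8, true_and,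
      false_and, if_true, if_false]
    split_ifs <;> ring
  · subst h; norm_num [Achain, eD, sgC, cC, dC, tC, wC]; split_ifs <;> ring
  · subst h; norm_num [Achain, eD, sgC, cC, dC, tC, wC]; split_ifs <;> ring
  · subst h; norm_num [Achain, eD, sgC, cC, dC, tC, wC]; split_ifs <;> ring
  · subst h; norm_num [Achain, eD, sgC, cC, dC, tC, wC]; split_ifs <;> ring
  · have h1 : (1 ≤ i) := by omega
    have h3 : ¬ i ≤ -3 := by omega
    have h4 : ¬ i ≤ -1 := by omega
    have h5 : i ≠ -2 := by omega
    have h6 : i ≠ -1 := by omega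
    have h7 : i ≠ 0 := by omega
    have h8 : i ≠ 1 := by omega
    simp only [Achain, eD, sgC, cC, dC, tC, wC, h, h1, h3, h4, h5, h6, h7, h8, true_and,
      false_and, if_true, if_false]
    split_ifs <;> ring

lemma pderivU_Achain (u : ℤ → ℝ) (i j m : ℤ) :
    pderivU (fun v => Achain v i j) u m = dA u i j m := by
  have hc : ∀ l : ℤ, HasDerivAt (fun s : ℝ => u l + s * (if l = m then 1 else 0))
      (eD l m) 0 := by
    intro l
    have h := ((hasDerivAt_id (0 : ℝ)).mul_const (if l = m then (1 : ℝ) else 0)).const_add (u l)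
    have he : eD l m = 1 * (if l = m then (1 : ℝ) else 0) := by
      simp [eD, eq_comm]
    rw [he]; exact h
  unfold pderivU
  simp only [Achain_eq]
  have H := ((((hc i).const_mul (sgC i)).mul (((hc 1).mul_const (eD 0 j)).add
    ((hc 0).mul_const (eD 1 j)))).add
    ((((hc (i+1)).const_mul (cC i)).add ((hc (i-1)).const_mul (dC i))).mul_const (eD 0 j))).add
    ((hc 0).mul_const (tC i * eD (i + 1) j + wC i * eD (i - 1) j))
  refine (HasDerivAt.deriv H).trans ?_
  simp only [Pi.add_apply, zero_mul, add_zero, dA, bC]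
  ring

/-- `f` has finite support and sum `a`. -/
def FS (f : ℤ → ℝ) (a : ℝ) : Prop := f.support.Finite ∧ ∑ᶠ p, f p = a

lemma FS.add {f g : ℤ → ℝ} {a b : ℝ} (hf : FS f a) (hg : FS g b) :
    FS (fun p => f p + g p) (a + b) := by
  refine ⟨(hf.1.union hg.1).subset (Function.support_add f g), ?_⟩
  rw [finsum_add_distrib hf.1 hg.1, hf.2, hg.2]

lemma FS.sub {f g : ℤ → ℝ} {a b : ℝ} (hf : FS f a) (hg : FS g b) :
    FS (fun p => f p - g p) (a - b) := by
  refine ⟨(hf.1.union hg.1).subset (Function.support_sub f g), ?_⟩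
  rw [finsum_sub_distrib hf.1 hg.1, hf.2, hg.2]

lemma FS.del (m : ℤ) (g : ℤ → ℝ) : FS (fun p => g p * eD m p) (g m) := by
  have h : ∀ p, p ≠ m → g p * eD m p = 0 := by
    intro p hp; simp [eD, hp]
  refine ⟨(Set.finite_singleton m).subset ?_, ?_⟩
  · intro p hp
    by_contra hne
    exact hp (h p hne)
  · rw [finsum_eq_single _ m h]; simp [eD]

lemma FS_left (u : ℤ → ℝ) (i k : ℤ) (g : ℤ → ℝ) :
    FS (fun p => g p * dA u i k p)
      (g i * (sgC i * bC u k) + g 1 * (sgC i * u i * eD 0 k) + g 0 * (sgC i * u i * eD 1 k)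
        + g (i + 1) * (cC i * eD 0 k) + g (i - 1) * (dC i * eD 0 k)
        + g 0 * (tC i * eD (i + 1) k + wC i * eD (i - 1) k)) := by
  have H := (((((FS.del i (fun p => g p * (sgC i * bC u k))).add
    (FS.del 1 (fun p => g p * (sgC i * u i * eD 0 k)))).add
    (FS.del 0 (fun p => g p * (sgC i * u i * eD 1 k)))).add
    (FS.del (i + 1) (fun p => g p * (cC i * eD 0 k)))).add
    (FS.del (i - 1) (fun p => g p * (dC i * eD 0 k)))).add
    (FS.del 0 (fun p => g p * (tC i * eD (i + 1) k + wC i * eD (i - 1) k)))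
  convert H using 1
  funext p
  simp only [dA]
  ring

lemma FS_right (u : ℤ → ℝ) (i : ℤ) (g : ℤ → ℝ) :
    FS (fun p => Achain u i p * g p)
      (sgC i * u i * (u 1 * g 0 + u 0 * g 1)
      + (cC i * u (i + 1) + dC i * u (i - 1)) * g 0
      + u 0 * (tC i * g (i + 1) + wC i * g (i - 1))) := by
  have H := (((FS.del 0 (fun p => g p * (sgC i * u i * u 1 +
      (cC i * u (i + 1) + dC i * u (i - 1))))).add
    (FS.del 1 (fun p => g p * (sgC i * u i * u 0)))).add
    (FS.del (i + 1) (fun p => g p * (u 0 * tC i)))).add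
    (FS.del (i - 1) (fun p => g p * (u 0 * wC i)))
  convert H using 1
  · funext p
    simp only [Achain_eq]
    ring
  · ring

lemma eD_row (i j : ℤ) : eD j i = eD i j := by simp [eD, eq_comm]

lemma nijenhuis_eq (u : ℤ → ℝ) (i j k : ℤ) : nijenhuis u i j k =
    bC u j * Achain u i k - bC u k * Achain u i j
      - 4 * u 0 * (eD 0 j * eD i k - eD 0 k * eD i j) := by
  unfold nijenhuis
  simp only [pderivU_Achain]
  rw [((FS_left u i k (fun p => Achain u p j)).sub (FS_left u i j (fun p => Achain u p k))).2,
    (FS_right u i (fun p => dA u p k j - dA u p j k)).2]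
  simp only [Achain_eq, dA, bC]
  have hi : i ≤ -4 ∨ i = -3 ∨ i = -2 ∨ i = -1 ∨ i = 0 ∨ i = 1 ∨ i = 2 ∨ 3 ≤ i := by omega
  rcases hi with h | h | h | h | h | h | h | h
  · have a1 : ∀ l, l ≤ i + 1 → sgC l = 1 := by
      intro l hl; simp only [sgC]; rw [if_neg (by omega)]
    have a2 : ∀ l : ℤ, l ≤ i + 1 → cC l = l + 2 := by
      intro l hl; simp only [cC]; rw [if_neg (by omega), if_pos (by omega)]
    have a3 : ∀ l : ℤ, l ≤ i + 1 → dC l = -l := by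
      intro l hl; simp only [dC]; rw [if_neg (by omega)]
    have a4 : ∀ l : ℤ, l ≤ i + 1 → tC l = 1 := by
      intro l hl; simp only [tC]
      rw [if_neg (by omega), if_neg (by omega), if_pos (by omega)]
    have a5 : ∀ l : ℤ, l ≤ i + 1 → wC l = 1 := by
      intro l hl; simp only [wC]; rw [if_neg (by omega), if_pos (by omega)]
    have l1 : i - 1 ≤ i + 1 := by omega
    have l2 : i ≤ i + 1 := by omega
    have l3 : i + 1 ≤ i + 1 := le_refl _
    simp only [a1 _ l1, a1 _ l2, a1 _ l3, a2 _ l1, a2 _ l2, a2 _ l3, a3 _ l1, a3 _ l2, a3 _ l3,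
      a4 _ l1, a4 _ l2, a4 _ l3, a5 _ l1, a5 _ l2, a5 _ l3, add_sub_cancel_right, sub_add_cancel]
    norm_num [sgC, cC, dC, tC, wC]
    ring
  · subst h; norm_num [sgC, cC, dC, tC, wC]; ring
  · subst h; norm_num [sgC, cC, dC, tC, wC]; ring
  · subst h; norm_num [sgC, cC, dC, tC, wC]; ring
  · subst h; norm_num [sgC, cC, dC, tC, wC]; ring
  · subst h; norm_num [sgC, cC, dC, tC, wC]; ring
  · subst h; norm_num [sgC, cC, dC, tC, wC]; ring
  · have a1 : ∀ l, i - 1 ≤ l → sgC l = -1 := by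
      intro l hl; simp only [sgC]; rw [if_pos (by omega)]
    have a2 : ∀ l : ℤ, i - 1 ≤ l → cC l = l + 1 := by
      intro l hl; simp only [cC]; rw [if_pos (by omega)]
    have a3 : ∀ l : ℤ, i - 1 ≤ l → dC l = 1 - l := by
      intro l hl; simp only [dC]; rw [if_pos (by omega)]
    have a4 : ∀ l : ℤ, i - 1 ≤ l → tC l = 1 := by
      intro l hl; simp only [tC]; rw [if_pos (by omega)]
    have a5 : ∀ l : ℤ, i - 1 ≤ l → wC l = 1 := by
      intro l hl; simp only [wC]; rw [if_pos (by omega)]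
    have l1 : i - 1 ≤ i + 1 := by omega
    have l2 : i - 1 ≤ i := by omega
    have l3 : i - 1 ≤ i - 1 := le_refl _
    simp only [a1 _ l1, a1 _ l2, a1 _ l3, a2 _ l1, a2 _ l2, a2 _ l3, a3 _ l1, a3 _ l2, a3 _ l3,
      a4 _ l1, a4 _ l2, a4 _ l3, a5 _ l1, a5 _ l2, a5 _ l3, add_sub_cancel_right, sub_add_cancel]
    norm_num [sgC, cC, dC, tC, wC]
    ring

/-- Finite index set carrying the Haantjes sums. -/
def SH (i : ℤ) : Finset ℤ := {0, 1, 2, i, i + 1, i - 1, i + 2, i - 2}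

lemma A_supp {u : ℤ → ℝ} {i p : ℤ} (h : Achain u i p ≠ 0) :
    p = 0 ∨ p = 1 ∨ p = i + 1 ∨ p = i - 1 := by
  by_contra hn
  push Not at hn
  apply h
  simp [Achain_eq, eD, hn]

lemma A_zero_two (u : ℤ → ℝ) (i p r : ℤ) (h : r ∉ SH i) : Achain u i p * Achain u p r = 0 := by
  by_contra hn
  have h1 := A_supp (left_ne_zero_of_mul hn)
  have h2 := A_supp (right_ne_zero_of_mul hn)
  have h3 : p = 0 → r ≠ -1 := by
    rintro rfl rfl
    apply right_ne_zero_of_mul hn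
    simp [Achain_eq, eD, wC]
  apply h
  simp only [SH, Finset.mem_insert, Finset.mem_singleton]
  omega

lemma A_zero_one (u : ℤ → ℝ) (i p : ℤ) (h : p ∉ SH i) : Achain u i p = 0 := by
  by_contra hn
  have h1 := A_supp hn
  apply h
  simp only [SH, Finset.mem_insert, Finset.mem_singleton]
  omega

lemma eD_zero (i p : ℤ) (h : p ∉ SH i) :
    eD i p = 0 ∧ eD p i = 0 ∧ eD 0 p = 0 ∧ eD 1 p = 0 := by
  simp only [SH, Finset.mem_insert, Finset.mem_singleton] at h
  push Not at h
  refine ⟨?_, ?_, ?_, ?_⟩ <;> simp [eD, h, Ne.symm h.2.2.2.1]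

lemma key_sum (S : Finset ℤ) (a b : ℤ → ℤ → ℝ) (f : ℤ → ℝ) (i j k : ℤ)
    (hi : i ∈ S) (hj : j ∈ S) (hk : k ∈ S)
    (h : ∀ p ∈ S, ∀ l ∈ S, ∑ r ∈ S, b p r * a r l = ∑ r ∈ S, a p r * b r l) :
    ∑ p ∈ S, ∑ r ∈ S,
      ((f p * b i r - f r * b i p) * a p j * a r k
        - (f j * b p r - f r * b p j) * a i p * a r k
        - (f r * b p k - f k * b p r) * a i p * a r j
        + (f j * b p k - f k * b p j) * a i r * a r p) = 0 := by
  have hC : ∀ l ∈ S, ∑ p ∈ S, ∑ r ∈ S, a i p * (b p r * a r l)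
      = ∑ p ∈ S, ∑ r ∈ S, a i r * (a r p * b p l) := by
    intro l hl
    rw [Finset.sum_comm (f := fun p r => a i r * (a r p * b p l))]
    refine Finset.sum_congr rfl fun p hp => ?_
    rw [← Finset.mul_sum, ← Finset.mul_sum, h p hp l hl]
  have hB : ∀ l ∈ S, ∀ m ∈ S, ∑ p ∈ S, ∑ r ∈ S, (f p * a p m) * (b i r * a r l)
      = ∑ p ∈ S, ∑ r ∈ S, (f r * a r m) * (a i p * b p l) := by
    intro l hl m hm
    rw [Finset.sum_comm (f := fun p r => (f r * a r m) * (a i p * b p l))]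
    refine Finset.sum_congr rfl fun p hp => ?_
    rw [← Finset.mul_sum, ← Finset.mul_sum, h i hi l hl]
  have hB' : ∑ p ∈ S, ∑ r ∈ S, (f r * a r k) * (b i p * a p j)
      = ∑ p ∈ S, ∑ r ∈ S, (f r * a r k) * (a i p * b p j) := by
    rw [← hB j hj k hk, Finset.sum_comm]
  have e : ∑ p ∈ S, ∑ r ∈ S,
      ((f p * b i r - f r * b i p) * a p j * a r k
        - (f j * b p r - f r * b p j) * a i p * a r k
        - (f r * b p k - f k * b p r) * a i p * a r j
        + (f j * b p k - f k * b p j) * a i r * a r p)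
      = (∑ p ∈ S, ∑ r ∈ S, (f p * a p j) * (b i r * a r k)
          - ∑ p ∈ S, ∑ r ∈ S, (f r * a r j) * (a i p * b p k))
        - (∑ p ∈ S, ∑ r ∈ S, (f r * a r k) * (b i p * a p j)
          - ∑ p ∈ S, ∑ r ∈ S, (f r * a r k) * (a i p * b p j))
        - f j * (∑ p ∈ S, ∑ r ∈ S, a i p * (b p r * a r k)
          - ∑ p ∈ S, ∑ r ∈ S, a i r * (a r p * b p k))
        + f k * (∑ p ∈ S, ∑ r ∈ S, a i p * (b p r * a r j)
          - ∑ p ∈ S, ∑ r ∈ S, a i r * (a r p * b p j)) := by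
    simp only [Finset.mul_sum, ← Finset.sum_sub_distrib, ← Finset.sum_add_distrib]
    refine Finset.sum_congr rfl fun p _ => Finset.sum_congr rfl fun r _ => ?_
    ring
  rw [e, hC k hk, hC j hj, hB k hk j hj, hB']
  ring

/-- The Haantjes tensor of the hydrodynamic chain vanishes
identically, so the chain is diagonalisable. -/
theorem haantjes_of_hydrodynamic_chain_vanishes :
    ∀ (u : ℤ → ℝ) (i j k : ℤ), haantjes u i j k = 0 := by
  intro u i j k
  unfold haantjes
  simp only [nijenhuis_eq]
  set S : Finset ℤ := insert j (insert k (SH i)) with hS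
  have hout : ∀ p, p ∉ S → p ∉ SH i := fun p hp hq => hp (by simp [hS, hq])
  have hiS : i ∈ S := by simp [hS, SH]
  have hjS : j ∈ S := by simp [hS]
  have hkS : k ∈ S := by simp [hS]
  set t : ℤ → ℤ → ℝ := fun p r =>
    ((bC u p * Achain u i r - bC u r * Achain u i p
        - 4 * u 0 * (eD 0 p * eD i r - eD 0 r * eD i p)) * Achain u p j * Achain u r k
      - (bC u j * Achain u p r - bC u r * Achain u p j
        - 4 * u 0 * (eD 0 j * eD p r - eD 0 r * eD p j)) * Achain u i p * Achain u r k
      - (bC u r * Achain u p k - bC u k * Achain u p r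
        - 4 * u 0 * (eD 0 r * eD p k - eD 0 k * eD p r)) * Achain u i p * Achain u r j
      + (bC u j * Achain u p k - bC u k * Achain u p j
        - 4 * u 0 * (eD 0 j * eD p k - eD 0 k * eD p j)) * Achain u i r * Achain u r p) with ht
  change ∑ᶠ p : ℤ, ∑ᶠ r : ℤ, t p r = 0
  have hp0 : ∀ p r, p ∉ S → t p r = 0 := by
    intro p r hp
    have hp := hout p hp
    have h1 := A_zero_one u i p hp
    have h2 := A_zero_two u i r p hp
    obtain ⟨e1, e2, e3, e4⟩ := eD_zero i p hp
    have hb : bC u p = 0 := by simp [bC, e3, e4]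
    simp only [ht, mul_assoc _ (Achain u i r) (Achain u r p), h1, h2, hb, e1, e3]
    ring
  have hr0 : ∀ p r, r ∉ S → t p r = 0 := by
    intro p r hr
    have hr := hout r hr
    have h1 := A_zero_one u i r hr
    have h2 := A_zero_two u i p r hr
    obtain ⟨e1, e2, e3, e4⟩ := eD_zero i r hr
    have hb : bC u r = 0 := by simp [bC, e3, e4]
    have h3 : eD p r * Achain u i p = 0 := by
      by_cases hpr : r = p
      · subst hpr; rw [h1, mul_zero]
      · simp [eD, hpr]
    simp only [ht, h1, hb, e1, e3]
    linear_combination (-bC u j * Achain u r k + bC u k * Achain u r j) * h2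
      + (4 * u 0 * eD 0 j * Achain u r k - 4 * u 0 * eD 0 k * Achain u r j) * h3
  have hin : ∀ p, ∑ᶠ r : ℤ, t p r = ∑ r ∈ S, t p r := by
    intro p
    refine finsum_eq_sum_of_support_subset _ fun r hr => ?_
    by_contra hn
    exact hr (hr0 p r hn)
  simp only [hin]
  rw [finsum_eq_sum_of_support_subset (s := S)]
  swap
  · intro p hp
    by_contra hn
    exact hp (Finset.sum_eq_zero fun r _ => hp0 p r hn)
  have K1 := key_sum S (Achain u) (Achain u) (bC u) i j k hiS hjS hkS (fun _ _ _ _ => rfl)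
  have K2 := key_sum S (Achain u) eD (eD 0) i j k hiS hjS hkS (by
    intro p hp l hl
    rw [Finset.sum_eq_single_of_mem p hp, Finset.sum_eq_single_of_mem l hl]
    · simp [eD]
    · intro r _ hr; simp [eD, hr.symm]
    · intro r _ hr; simp [eD, hr])
  have e : ∑ p ∈ S, ∑ r ∈ S, t p r = 0 - 4 * u 0 * 0 := by
    nth_rewrite 1 [← K1]
    rw [← K2]
    simp only [Finset.mul_sum, ← Finset.sum_sub_distrib]
    refine Finset.sum_congr rfl fun p _ => Finset.sum_congr rfl fun r _ => ?_
    simp only [ht]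
    ring
  rw [e]; ring

end
end

section
/- Let w^{−1} : ℝ → ℝ and w^k_1 : ℝ → ℝ (k ≥ 1) be differentiable functions satisfying d w^{−1}/dt = (w^{−1})² c₁ w¹_1 and, for every k ≥ 1, d w^k_1/dt = w^{−1} ( c_{k+1} w^{k+1}_1 − c₁ w¹_1 w^k_1 + ((k c₁² − c_k²)/c_k) w^{k−1}_1 ) with w⁰_1 := 0. Define F_k := 2^k k! / √((2k)!) for k ≥ 1, and set W^{−1} := w^{−1} and W^k := w^k_1 / F_k for k ≥ 1, with W⁰ := 0. Then d W^{−1}/dt = 2 (W^{−1})² W¹ and, for every k ≥ 1, d W^k/dt = 2 W^{−1} ( (k+1) W^{k+1} − W¹ W^k − (k−1) W^{k−1} ). -/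
noncomputable section

/-- `c_m = √(2m(2m−1))` for `m ≥ 1` (and `c₀ = 0`). -/
def cc (m : ℕ) : ℝ := Real.sqrt (2 * (m : ℝ) * (2 * (m : ℝ) - 1))

/-- The rescaling factors `F_k = 2^k k! / √((2k)!)`. -/
def Fk (k : ℕ) : ℝ := 2 ^ k * (k.factorial : ℝ) / Real.sqrt ((2 * k).factorial : ℝ)

lemma cc_sq (k : ℕ) : cc (k + 1) ^ 2 = 2 * ((k : ℝ) + 1) * (2 * (k : ℝ) + 1) := by
  unfold cc
  rw [Real.sq_sqrt]
  · push_cast; ring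
  · push_cast
    have : (0 : ℝ) ≤ k := Nat.cast_nonneg k
    apply mul_nonneg <;> linarith

lemma cc_pos (k : ℕ) : 0 < cc (k + 1) := by
  unfold cc
  apply Real.sqrt_pos.2
  push_cast
  have : (0 : ℝ) ≤ k := Nat.cast_nonneg k
  apply mul_pos <;> linarith

lemma Fk_pos (k : ℕ) : 0 < Fk k := by
  unfold Fk
  have := Nat.factorial_pos k
  have := Nat.factorial_pos (2 * k)
  positivity

lemma cc_Fk (k : ℕ) : cc (k + 1) * Fk (k + 1) = 2 * ((k : ℝ) + 1) * Fk k := by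
  have h : Real.sqrt ((2 * (k + 1)).factorial : ℝ)
      = cc (k + 1) * Real.sqrt ((2 * k).factorial : ℝ) := by
    have h0 : (0 : ℝ) ≤ k := Nat.cast_nonneg k
    unfold cc
    rw [← Real.sqrt_mul]
    · congr 1
      rw [show 2 * (k + 1) = 2 * k + 1 + 1 by ring, Nat.factorial_succ, Nat.factorial_succ]
      push_cast
      ring
    · push_cast
      apply mul_nonneg <;> linarith
  have hc := cc_pos k
  have hs : 0 < Real.sqrt ((2 * k).factorial : ℝ) := by
    have := Nat.factorial_pos (2 * k)
    positivity
  unfold Fk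
  rw [h, Nat.factorial_succ]
  push_cast
  field_simp
  ring

/-- The rescaling `W^{−1} = w^{−1}`, `W^k = w^k_1 / F_k` (with `W⁰ = 0`)
transforms the reduced even Pfaff lattice equations into the universal chain
`dW^{−1}/dt = 2 (W^{−1})² W¹`,
`dW^k/dt = 2 W^{−1} ((k+1) W^{k+1} − W¹ W^k − (k−1) W^{k−1})`. -/
theorem rescaled_reduced_pfaff_chain
    (wm1 : ℝ → ℝ) (w1 : ℕ → ℝ → ℝ)
    (hdm1 : Differentiable ℝ wm1)
    (hd1 : ∀ k : ℕ, 1 ≤ k → Differentiable ℝ (w1 k))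
    (hw10 : ∀ t : ℝ, w1 0 t = 0)
    (hm1 : ∀ t : ℝ, deriv wm1 t = (wm1 t) ^ 2 * (cc 1 * w1 1 t))
    (hk : ∀ k : ℕ, 1 ≤ k → ∀ t : ℝ,
      deriv (w1 k) t =
        wm1 t * (cc (k + 1) * w1 (k + 1) t - cc 1 * w1 1 t * w1 k t
          + (((k : ℝ) * (cc 1) ^ 2 - (cc k) ^ 2) / cc k) * w1 (k - 1) t))
    (Wm1 : ℝ → ℝ) (W : ℕ → ℝ → ℝ)
    (hWm1 : ∀ t : ℝ, Wm1 t = wm1 t)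
    (hW0 : ∀ t : ℝ, W 0 t = 0)
    (hWk : ∀ k : ℕ, 1 ≤ k → ∀ t : ℝ, W k t = w1 k t / Fk k) :
    (∀ t : ℝ, deriv Wm1 t = 2 * (Wm1 t) ^ 2 * W 1 t)
    ∧
    (∀ k : ℕ, 1 ≤ k → ∀ t : ℝ,
      deriv (W k) t =
        2 * Wm1 t *
          (((k : ℝ) + 1) * W (k + 1) t - W 1 t * W k t - ((k : ℝ) - 1) * W (k - 1) t)) := by
  have hW : ∀ k t, w1 k t = Fk k * W k t := by
    intro k t
    rcases Nat.eq_zero_or_pos k with rfl | h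
    · rw [hw10, hW0, mul_zero]
    · rw [hWk k h, mul_div_cancel₀ _ (Fk_pos k).ne']
  have hF0 : Fk 0 = 1 := by simp [Fk]
  have h1 : cc 1 * Fk 1 = 2 := by
    have := cc_Fk 0
    simpa [hF0] using this
  have hWm : Wm1 = wm1 := funext hWm1
  subst hWm
  refine ⟨fun t => ?_, fun k hk1 t => ?_⟩
  · rw [hm1, hW 1]
    linear_combination Wm1 t ^ 2 * W 1 t * h1
  · have e : W k = fun t => w1 k t / Fk k := funext (hWk k hk1)
    have hd : deriv (W k) t = deriv (w1 k) t / Fk k := by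
      rw [e, deriv_div_const]
    rw [hd, hk k hk1 t, div_eq_iff (Fk_pos k).ne', hW (k + 1), hW 1, hW k, hW (k - 1)]
    obtain ⟨j, rfl⟩ : ∃ j, k = j + 1 := ⟨k - 1, by omega⟩
    have a := cc_Fk (j + 1)
    have b := cc_Fk j
    have c1 : cc 1 ^ 2 = 2 := by simpa using cc_sq 0
    have hc := cc_pos j
    have d : ((((j + 1 : ℕ) : ℝ) * cc 1 ^ 2 - cc (j + 1) ^ 2) / cc (j + 1)) * Fk j
        = - 2 * j * Fk (j + 1) := by
      rw [c1, cc_sq, div_mul_eq_mul_div, div_eq_iff hc.ne']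
      push_cast
      linear_combination 2 * (j : ℝ) * b
    simp only [Nat.add_sub_cancel]
    push_cast at a d ⊢
    linear_combination Wm1 t * W (j + 1 + 1) t * a
      - Wm1 t * W 1 t * W (j + 1) t * Fk (j + 1) * h1 + Wm1 t * W j t * d

end
end

section
/- Let u^{−1} : ℝ → ℝ and u^k : ℝ → ℝ (k ≥ 1) be differentiable functions of t satisfying d u^{−1}/dt = 2 (u^{−1})² u¹ and, for every k ≥ 1, d u^k/dt = 2 u^{−1} ( (k+1) u^{k+1} − u¹ u^k − (k−1) u^{k−1} ) (with u⁰ interpreted as 0 in the k = 1 equation). Define fields on ℝ²: û^{−k}(x, t) := 0 for every k ≥ 2; û^{−1}(x, t) := u^{−1}(t); û⁰(x, t) := 2 x u^{−1}(t); and û^k(x, t) := u^k(t) for k ≥ 1. Then the family {û^ℓ} (ℓ ∈ ℤ) is a solution of the hydrodynamic chain. -/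
noncomputable section

/-- Partial derivative with respect to the first (space) variable. -/
def pdx (f : ℝ → ℝ → ℝ) (x t : ℝ) : ℝ := deriv (fun x' => f x' t) x

/-- Partial derivative with respect to the second (time) variable. -/
def pdt (f : ℝ → ℝ → ℝ) (x t : ℝ) : ℝ := deriv (fun t' => f x t') t

/-- The hydrodynamic chain arising as the continuum limit of the reduced even Pfaff
lattice, for the fields `u^ℓ(x, t)`, `ℓ ∈ ℤ`. -/
def HydroChain (u : ℤ → ℝ → ℝ → ℝ) : Prop :=
  (∀ k : ℕ, 3 ≤ k → ∀ x t : ℝ,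
      pdt (u (-(k : ℤ))) x t =
        ((k : ℝ) * u (-(k : ℤ) - 1) x t - ((k : ℝ) - 2) * u (-(k : ℤ) + 1) x t
            + u (-(k : ℤ)) x t * u 1 x t) * pdx (u 0) x t
          + u 0 x t * u (-(k : ℤ)) x t * pdx (u 1) x t
          + u 0 x t * (pdx (u (-(k : ℤ) + 1)) x t + pdx (u (-(k : ℤ) - 1)) x t))
  ∧
  (∀ x t : ℝ,
      pdt (u (-2)) x t =
        (u (-2) x t * u 1 x t + 2 * u (-3) x t) * pdx (u 0) x t
          + u 0 x t * u (-2) x t * pdx (u 1) x t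
          + u 0 x t * pdx (u (-3)) x t + 2 * u 0 x t * pdx (u (-1)) x t)
  ∧
  (∀ x t : ℝ,
      pdt (u (-1)) x t =
        (u (-1) x t * u 1 x t + u (-2) x t) * pdx (u 0) x t
          + u 0 x t * u (-1) x t * pdx (u 1) x t
          + u 0 x t * pdx (u (-2)) x t)
  ∧
  (∀ x t : ℝ,
      pdt (u 0) x t =
        u 0 x t * u 1 x t * pdx (u 0) x t + (u 0 x t) ^ 2 * pdx (u 1) x t)
  ∧
  (∀ x t : ℝ,
      pdt (u 1) x t =
        (2 * u 2 x t - (u 1 x t) ^ 2) * pdx (u 0) x t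
          - u 0 x t * u 1 x t * pdx (u 1) x t + u 0 x t * pdx (u 2) x t)
  ∧
  (∀ k : ℕ, 2 ≤ k → ∀ x t : ℝ,
      pdt (u (k : ℤ)) x t =
        (((k : ℝ) + 1) * u ((k : ℤ) + 1) x t - ((k : ℝ) - 1) * u ((k : ℤ) - 1) x t
            - u (k : ℤ) x t * u 1 x t) * pdx (u 0) x t
          - u 0 x t * u (k : ℤ) x t * pdx (u 1) x t
          + u 0 x t * (pdx (u ((k : ℤ) + 1)) x t + pdx (u ((k : ℤ) - 1)) x t))

/-- A solution of the universal one-dimensional chain of ODEs yields,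
via the ansatz `û^{−k} = 0` (`k ≥ 2`), `û^{−1}(x,t) = u^{−1}(t)`,
`û⁰(x,t) = 2x u^{−1}(t)`, `û^k(x,t) = u^k(t)` (`k ≥ 1`), a solution of the
hydrodynamic chain. -/
theorem ode_reduction_solves_hydro_chain
    (um1 : ℝ → ℝ) (uk : ℕ → ℝ → ℝ)
    (hdm1 : Differentiable ℝ um1)
    (hdk : ∀ k : ℕ, 1 ≤ k → Differentiable ℝ (uk k))
    (hm1 : ∀ t : ℝ, deriv um1 t = 2 * (um1 t) ^ 2 * uk 1 t)
    (hk : ∀ k : ℕ, 1 ≤ k → ∀ t : ℝ,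
      deriv (uk k) t =
        2 * um1 t *
          (((k : ℝ) + 1) * uk (k + 1) t - uk 1 t * uk k t - ((k : ℝ) - 1) * uk (k - 1) t)) :
    HydroChain (fun ℓ x t =>
      if ℓ ≤ -2 then 0
      else if ℓ = -1 then um1 t
      else if ℓ = 0 then 2 * x * um1 t
      else uk ℓ.toNat t) := by
  have key : ∀ (u : ℤ → ℝ → ℝ → ℝ), (∀ ℓ : ℤ, ℓ ≤ -2 → u ℓ = fun _ _ => 0) →
      (u (-1) = fun _ t => um1 t) → (u 0 = fun x t => 2 * x * um1 t) →
      (∀ k : ℕ, 1 ≤ k → u (k : ℤ) = fun _ t => uk k t) → HydroChain u := by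
    intro u hneg h1 h0 hpos
    have hu1 : u 1 = fun _ t => uk 1 t := by simpa using hpos 1 le_rfl
    have hu2 : u 2 = fun _ t => uk 2 t := by simpa using hpos 2 (by norm_num)
    have hx0 : ∀ x t, pdx (u 0) x t = 2 * um1 t := by
      intro x t
      rw [h0]
      have h : HasDerivAt (fun x' : ℝ => 2 * x' * um1 t) (2 * 1 * um1 t) x :=
        ((hasDerivAt_id x).const_mul 2).mul_const (um1 t)
      simpa [pdx] using h.deriv
    have ht0 : ∀ x t, pdt (u 0) x t = 2 * x * (2 * (um1 t) ^ 2 * uk 1 t) := by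
      intro x t
      rw [h0, ← hm1]
      exact ((hdm1 t).hasDerivAt.const_mul (2 * x)).deriv
    have hxc : ∀ (f : ℝ → ℝ) x t, pdx (fun _ t => f t) x t = 0 := by
      intro f x t
      simp [pdx]
    have hz : ∀ x t, pdx (fun _ _ => 0) x t = 0 := by
      intro x t
      simp [pdx]
    have htz : ∀ x t, pdt (fun _ _ => 0) x t = 0 := by
      intro x t
      simp [pdt]
    have htc : ∀ (f : ℝ → ℝ) x t, pdt (fun _ t => f t) x t = deriv f t := by
      intro f x t
      rfl
    refine ⟨?_, ?_, ?_, ?_, ?_, ?_⟩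
    · intro k hk3 x t
      rw [hx0, hneg (-(k : ℤ)) (by omega), hneg (-(k : ℤ) - 1) (by omega),
        hneg (-(k : ℤ) + 1) (by omega), hz, htz]
      ring
    · intro x t
      rw [hx0, hneg (-2) (by norm_num), hneg (-3) (by norm_num), h1, hz, htz, hxc]
      ring
    · intro x t
      rw [hx0, hneg (-2) (by norm_num), h1, hu1, hz, htc, hxc, hm1]
      ring
    · intro x t
      rw [hx0, ht0, hu1, hxc, h0]
      ring
    · intro x t
      rw [hx0, hu1, hu2, hxc, hxc, htc, hk 1 le_rfl]
      push_cast
      ring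
    · intro k hk2 x t
      have ha : u ((k : ℤ) + 1) = fun _ t => uk (k + 1) t := by
        simpa using hpos (k + 1) (by omega)
      have hb : u ((k : ℤ) - 1) = fun _ t => uk (k - 1) t := by
        have := hpos (k - 1) (by omega)
        rwa [Nat.cast_sub (by omega), Nat.cast_one] at this
      rw [hx0, ha, hb, hpos k (by omega), hu1, hxc, hxc, hxc, htc, hk k (by omega)]
      ring
  apply key
  · intro ℓ hℓ
    simp [hℓ]
  · simp
  · simp
  · intro k hk1
    funext x t
    rw [if_neg (by omega), if_neg (by omega), if_neg (by omega), Int.toNat_natCast]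

end
end

section
/- For all integers n ≥ 1 and k ≥ 1, the following identity holds: binom(n+k−1, k) · 4k(1−k) − binom(n+k−1, k−1) · 2n(2n−1) + binom(n+k−2, k−1) · (n+k−1) · (4n + 4k − 6) = 0. Equivalently, with c_m² := 2m(2m−1): binom(n+k−1, k) (k c₁² − c_k²) − binom(n+k−1, k−1) c_n² + binom(n+k−2, k−1) c_{n+k−1}² = 0. -/
/-- The key binomial cancellation in the inductive proof that
`w^k_n = C(n+k−1, k)(∏_{ℓ=1}^k c_ℓ/c_{n+k−ℓ}) w^k_1` solves the reduced even Pfaff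
lattice: with `c_m = √(2m(2m−1))`, for all `n, k ≥ 1`,
`C(n+k−1,k)·4k(1−k) − C(n+k−1,k−1)·2n(2n−1) + C(n+k−2,k−1)·(n+k−1)(4n+4k−6) = 0`,
equivalently
`C(n+k−1,k)(k c₁² − c_k²) − C(n+k−1,k−1) c_n² + C(n+k−2,k−1) c_{n+k−1}² = 0`. -/
theorem binomial_cancellation_identity (n k : ℕ) (hn : 1 ≤ n) (hk : 1 ≤ k) :
    (((n + k - 1).choose k : ℝ) * (4 * (k : ℝ) * (1 - (k : ℝ)))
        - ((n + k - 1).choose (k - 1) : ℝ) * (2 * (n : ℝ) * (2 * (n : ℝ) - 1))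
        + ((n + k - 2).choose (k - 1) : ℝ) * ((n : ℝ) + (k : ℝ) - 1) *
            (4 * (n : ℝ) + 4 * (k : ℝ) - 6) = 0)
    ∧
    (((n + k - 1).choose k : ℝ) *
          ((k : ℝ) * Real.sqrt (2 * (1 : ℝ) * (2 * (1 : ℝ) - 1)) ^ 2
            - Real.sqrt (2 * (k : ℝ) * (2 * (k : ℝ) - 1)) ^ 2)
        - ((n + k - 1).choose (k - 1) : ℝ) *
            Real.sqrt (2 * (n : ℝ) * (2 * (n : ℝ) - 1)) ^ 2
        + ((n + k - 2).choose (k - 1) : ℝ) *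
            Real.sqrt (2 * ((n : ℝ) + (k : ℝ) - 1) * (2 * ((n : ℝ) + (k : ℝ) - 1) - 1)) ^ 2
      = 0) := by
  obtain ⟨a, rfl⟩ : ∃ a, n = a + 1 := ⟨n - 1, by omega⟩
  obtain ⟨b, rfl⟩ : ∃ b, k = b + 1 := ⟨k - 1, by omega⟩
  have e1 : a + 1 + (b + 1) - 1 = a + b + 1 := by omega
  have e2 : a + 1 + (b + 1) - 2 = a + b := by omega
  have e3 : b + 1 - 1 = b := by omega
  rw [e1, e2, e3]
  have h1 := Nat.add_one_mul_choose_eq (a + b) b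
  have h2 := Nat.choose_mul_succ_eq (a + b) b
  have e4 : a + b + 1 - b = a + 1 := by omega
  rw [e4] at h2
  have h1' : ((a : ℝ) + b + 1) * ((a + b).choose b : ℝ)
      = ((a + b + 1).choose (b + 1) : ℝ) * (b + 1) := by exact_mod_cast h1
  have h2' : ((a + b).choose b : ℝ) * ((a : ℝ) + b + 1)
      = ((a + b + 1).choose b : ℝ) * (a + 1) := by exact_mod_cast h2
  have ha : (0 : ℝ) ≤ a := Nat.cast_nonneg a
  have hb : (0 : ℝ) ≤ b := Nat.cast_nonneg b
  have sq : ∀ x : ℝ, 0 ≤ x → Real.sqrt (2 * (x + 1) * (2 * (x + 1) - 1)) ^ 2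
      = 2 * (x + 1) * (2 * (x + 1) - 1) := by
    intro x hx
    apply Real.sq_sqrt
    apply mul_nonneg <;> linarith
  have s0 := sq 0 le_rfl
  have s3 := sq (a + b) (by positivity)
  rw [zero_add] at s0
  have e5 : ((a : ℝ) + 1 + (b + 1) - 1) = a + b + 1 := by ring
  push_cast
  rw [e5, s0, sq a ha, sq b hb, s3]
  constructor
  · linear_combination (4 * (b : ℝ)) * h1' + (2 * (2 * (a : ℝ) + 1)) * h2'
  · linear_combination (4 * (b : ℝ)) * h1' + (2 * (2 * (a : ℝ) + 1)) * h2'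
end

section
/- Let λ, u⁰, u¹, u², u³, u^{−1}, u^{−2} and d⁰, d¹, d², d³, d^{−1}, d^{−2} be real numbers with u⁰ ≠ 0, satisfying the contracted chain relations: λ d⁰ = u⁰ u¹ d⁰ + (u⁰)² d¹; λ d¹ = (2u² − (u¹)²) d⁰ − u⁰ u¹ d¹ + u⁰ d²; λ d² = (3u³ − u¹ − u² u¹) d⁰ − u⁰ u² d¹ + u⁰ (d¹ + d³); and λ d^{−1} = (u^{−1} u¹ + u^{−2}) d⁰ + u⁰ u^{−1} d¹ + u⁰ d^{−2}. Then: d¹ = ((λ − u¹ u⁰)/(u⁰)²) d⁰; d² = ((λ² − 2 u² (u⁰)²)/(u⁰)³) d⁰; d³ = (((u⁰)³ (2u¹ − 3u³) − (u⁰)² (1 + u²) λ + λ³)/(u⁰)⁴) d⁰; and d^{−2} = (λ/u⁰) d^{−1} − ((u^{−2} u⁰ + u^{−1} λ)/(u⁰)²) d⁰. -/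
/-- The contracted hydrodynamic-reduction relations for the chain
arising from the reduced even Pfaff lattice: from the components of
`λ ∂ᵢu^k = Σ_ℓ A^k_ℓ(u) ∂ᵢu^ℓ` for `k = 0, 1, 2, −1` one deduces the expressions of
`∂ᵢu¹, ∂ᵢu², ∂ᵢu³, ∂ᵢu^{−2}` used to derive the Gibbons–Tsarev system. -/
theorem contracted_chain_relations
    (lam u0 u1 u2 u3 um1 um2 d0 d1 d2 d3 dm1 dm2 : ℝ)
    (hu0 : u0 ≠ 0)
    (e1 : lam * d0 = u0 * u1 * d0 + u0 ^ 2 * d1)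
    (e2 : lam * d1 = (2 * u2 - u1 ^ 2) * d0 - u0 * u1 * d1 + u0 * d2)
    (e3 : lam * d2 = (3 * u3 - u1 - u2 * u1) * d0 - u0 * u2 * d1 + u0 * (d1 + d3))
    (e4 : lam * dm1 = (um1 * u1 + um2) * d0 + u0 * um1 * d1 + u0 * dm2) :
    d1 = ((lam - u1 * u0) / u0 ^ 2) * d0
    ∧ d2 = ((lam ^ 2 - 2 * u2 * u0 ^ 2) / u0 ^ 3) * d0
    ∧ d3 = ((u0 ^ 3 * (2 * u1 - 3 * u3) - u0 ^ 2 * (1 + u2) * lam + lam ^ 3) / u0 ^ 4) * d0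
    ∧ dm2 = (lam / u0) * dm1 - ((um2 * u0 + um1 * lam) / u0 ^ 2) * d0 := by
  have h1 : u0 ^ 2 * d1 = (lam - u1 * u0) * d0 := by linear_combination -e1
  have h2 : u0 ^ 3 * d2 = (lam ^ 2 - 2 * u2 * u0 ^ 2) * d0 := by
    linear_combination -u0 ^ 2 * e2 + (lam + u0 * u1) * h1
  have h3 : u0 ^ 4 * d3
      = (u0 ^ 3 * (2 * u1 - 3 * u3) - u0 ^ 2 * (1 + u2) * lam + lam ^ 3) * d0 := by
    linear_combination -u0 ^ 3 * e3 + lam * h2 + u0 ^ 2 * (u2 - 1) * h1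
  have h4 : u0 ^ 2 * dm2 = u0 * lam * dm1 - (um2 * u0 + um1 * lam) * d0 := by
    linear_combination -u0 * e4 - um1 * h1
  refine ⟨?_, ?_, ?_, ?_⟩
  · rw [div_mul_eq_mul_div, eq_div_iff (pow_ne_zero _ hu0)]
    linear_combination h1
  · rw [div_mul_eq_mul_div, eq_div_iff (pow_ne_zero _ hu0)]
    linear_combination h2
  · rw [div_mul_eq_mul_div, eq_div_iff (pow_ne_zero _ hu0)]
    linear_combination h3
  · apply mul_left_cancel₀ (pow_ne_zero 2 hu0)
    rw [h4]
    field_simp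
end
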